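/- Fix a total lost time L ≥ 0 and set A = 1.5·L + 5. Fix a margin of safety 0 < α < 1, a true saturation flow rate s > 0 for one critical lane group, and a constant K ≥ 0 representing the sum of the true flow ratios of the remaining critical lane groups. Define C(v) = A/(1 − (v/s + K)/(1-α)) and C^r(v) = A/(1 − (v/s + K)). Then for any volumes 0 ≤ v₁ < v₂ with (v₂/s + K)/(1-α) < 1, the over-estimation is strictly larger at the higher volume: C(v₂) − C^r(v₂) > C(v₁) − C^r(v₁). (The over-estimated cycle-length values grow with the increase of the incoming critical traffic flow.) -/

import Mathlib

/-- The cycle-length over-estimation `C(v) − C^r(v)` grows with the incoming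
critical traffic volume `v`. -/
theorem cycle_length_overestimation_strictMono
    (L : ℝ) (hL : 0 ≤ L) (α s K : ℝ)
    (hα0 : 0 < α) (hα1 : α < 1) (hs : 0 < s) (hK : 0 ≤ K)
    (v₁ v₂ : ℝ) (hv₁ : 0 ≤ v₁) (h12 : v₁ < v₂)
    (hlt : (v₂ / s + K) / (1 - α) < 1) :
    (1.5 * L + 5) / (1 - (v₂ / s + K) / (1 - α))
        - (1.5 * L + 5) / (1 - (v₂ / s + K))
      > (1.5 * L + 5) / (1 - (v₁ / s + K) / (1 - α))
        - (1.5 * L + 5) / (1 - (v₁ / s + K)) := by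
  have hb : 0 < 1 - α := by linarith
  have hx1 : 0 ≤ v₁ / s + K := by positivity
  have hx12 : v₁ / s + K < v₂ / s + K := by
    have := div_lt_div_of_pos_right h12 hs
    linarith
  have hx2 : v₂ / s + K < 1 - α := by
    rwa [div_lt_one hb] at hlt
  generalize v₁ / s + K = x at *
  generalize v₂ / s + K = y at *
  have hA : 0 < 1.5 * L + 5 := by positivity
  generalize 1.5 * L + 5 = A at *
  have key : ∀ z : ℝ, z < 1 - α →
      A / (1 - z / (1 - α)) - A / (1 - z) = (A * α * z) / ((1 - α - z) * (1 - z)) := by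
    intro z hz
    have h1 : 1 - α - z ≠ 0 := ne_of_gt (by linarith)
    have h2 : 1 - z ≠ 0 := ne_of_gt (by linarith)
    have h3 : 1 - z / (1 - α) = (1 - α - z) / (1 - α) := by
      field_simp
    rw [h3]
    field_simp
    ring
  rw [key x (by linarith), key y hx2, gt_iff_lt]
  have hy1 : 0 < 1 - α - y := by linarith
  have hy2 : 0 < 1 - y := by linarith
  have hAα : 0 < A * α := by positivity
  have hden : (1 - α - y) * (1 - y) ≤ (1 - α - x) * (1 - x) :=
    mul_le_mul (by linarith) (by linarith) hy2.le (by linarith)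
  have hpos : 0 < (1 - α - y) * (1 - y) := by positivity
  have hnum : A * α * x < A * α * y := mul_lt_mul_of_pos_left hx12 hAα
  calc (A * α * x) / ((1 - α - x) * (1 - x))
      ≤ (A * α * x) / ((1 - α - y) * (1 - y)) :=
        div_le_div_of_nonneg_left (by positivity) hpos hden
    _ < _ := div_lt_div_of_pos_right hnum hpos
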